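/- Let (Γ,+,d) be a metric Abelian monoid and φ an admissible function with the vanishing defect property: for every ε > 0 and every quasi-linear sequence γ̄ with defect bounded by some multiple of φ, there exists a quasi-linear sequence γ̄' with dista(γ̄,γ̄') = 0 whose defect is bounded by an admissible function ψ satisfying ∫_1^∞ ψ(t)/t² dt < ε. Then linear sequences are dense: for every quasi-linear sequence γ̄ with defect bounded by some multiple of φ and every ε > 0, there exists γ ∈ Γ such that dista(γ̄, (n•γ)_{n∈ℕ}) < ε. -/

import Mathlib

open MeasureTheory Filter

/-- A pseudometric on `Γ`: reflexive-zero, symmetric, triangle inequality. -/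
def IsPseudoMetric {Γ : Type*} (d : Γ → Γ → ℝ) : Prop :=
  (∀ x, d x x = 0) ∧ (∀ x y, d x y = d y x) ∧ (∀ x y z, d x z ≤ d x y + d y z)

/-- A metric Abelian monoid: an additive commutative monoid with a pseudometric
for which addition is 1-Lipschitz in each argument. -/
def IsMetricAbelianMonoid {Γ : Type*} [AddCommMonoid Γ] (d : Γ → Γ → ℝ) : Prop :=
  IsPseudoMetric d ∧ ∀ a b c : Γ, d (a + b) (a + c) ≤ d b c

/-- `φ : [1,∞) → [0,∞)` is admissible with constant `D ≥ 0`: non-decreasing,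
summable against `dt/t²`, and `s·∫_s^∞ φ(t)/t² dt ≤ (D/8)·φ(s)` for all `s ≥ 1`. -/
def AdmissibleWith (φ : ℝ → ℝ) (D : ℝ) : Prop :=
  (∀ t, 1 ≤ t → 0 ≤ φ t) ∧ MonotoneOn φ (Set.Ici 1) ∧ 0 ≤ D ∧
  (∀ s, 1 ≤ s → IntegrableOn (fun t => φ t / t ^ 2) (Set.Ioi s)) ∧
  (∀ s, 1 ≤ s → s * ∫ t in Set.Ioi s, φ t / t ^ 2 ≤ D / 8 * φ s)

def Admissible (φ : ℝ → ℝ) : Prop := ∃ D, AdmissibleWith φ D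

/-- A sequence `γ : ℕ → Γ` is quasi-linear with defect bounded by `φ`
(with respect to the pseudometric `d`). -/
def QuasiLinear {Γ : Type*} [AddCommMonoid Γ] (d : Γ → Γ → ℝ) (φ : ℝ → ℝ)
    (γ : ℕ → Γ) : Prop :=
  γ 0 = 0 ∧ ∀ m n : ℕ, 1 ≤ m → 1 ≤ n →
    d (γ (m + n)) (γ m + γ n) ≤ φ ((m + n : ℕ) : ℝ)

/-- The asymptotic distance `lim_{n→∞} d(γ₁(n),γ₂(n))/n`, realized as a `limsup`
(for quasi-linear sequences the limit exists, so this is that limit). -/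
noncomputable def dista {Γ : Type*} (d : Γ → Γ → ℝ) (γ₁ γ₂ : ℕ → Γ) : ℝ :=
  Filter.limsup (fun n : ℕ => d (γ₁ n) (γ₂ n) / n) Filter.atTop

/-! The distance `n ↦ d (γ₁ n) (γ₂ n)` between two quasi-linear sequences is subadditive up to the
sum of their defects. A sequence `E` that is subadditive up to a monotone error `ψ ≥ 0` with
`I = ∫_1^∞ ψ(t)/t² dt < ∞` grows at most linearly, `E n ≤ n (E 1 + 6 I)`: split off the leading
binary digit of `n` and compare the errors at powers of two with dyadic pieces of the integral.
For `γ₂ n = n • γ₁ 1` the term `E 1` vanishes, so `γ₁` lies within asymptotic distance `6 I` of the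
linear sequence through its first term. The vanishing defect property makes `I` arbitrarily small.
-/

/-- The part of admissibility that controls linear growth: `ψ` is non-negative and non-decreasing
on `[1,∞)`, with `∫_1^∞ ψ(t)/t² dt < ∞`. For instance `t / (2 + log t)²` qualifies without being
admissible. -/
structure IsSummableDefect (ψ : ℝ → ℝ) : Prop where
  nonneg : ∀ t, 1 ≤ t → 0 ≤ ψ t
  monotoneOn : MonotoneOn ψ (Set.Ici 1)
  integrableOn : IntegrableOn (fun t => ψ t / t ^ 2) (Set.Ioi 1)

/-- Subadditivity up to an error `ψ (m + n)`, the hypothesis of the de Bruijn–Erdős generalization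
of Fekete's lemma. -/
def IsAlmostSubadditive (E : ℕ → ℝ) (ψ : ℝ → ℝ) : Prop :=
  ∀ m n : ℕ, 1 ≤ m → 1 ≤ n → E (m + n) ≤ E m + E n + ψ ((m + n : ℕ) : ℝ)

section Integral

variable {ψ : ℝ → ℝ} {a b : ℝ}

lemma intervalIntegrable_div_sq_of_monotoneOn (ha : 0 < a) (hab : a ≤ b)
    (hψ : MonotoneOn ψ (Set.Icc a b)) :
    IntervalIntegrable (fun t => ψ t / t ^ 2) volume a b := by
  rw [← Set.uIcc_of_le hab] at hψ
  have h0 : ∀ t ∈ Set.uIcc a b, t ^ 2 ≠ 0 := fun t ht =>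
    pow_ne_zero 2 fun h => Set.notMem_uIcc_of_lt ha (ha.trans_le hab) (h ▸ ht)
  simpa only [div_eq_mul_inv, Pi.inv_apply] using
    hψ.intervalIntegrable.mul_continuousOn ((continuousOn_pow 2).inv₀ h0)

lemma integral_const_div_sq (c : ℝ) (ha : 0 < a) (hb : 0 < b) :
    ∫ t in a..b, c / t ^ 2 = c * (a⁻¹ - b⁻¹) := by
  calc ∫ t in a..b, c / t ^ 2 = c * ∫ t in a..b, t ^ (-2 : ℤ) := by
        simp only [← intervalIntegral.integral_const_mul, div_eq_mul_inv, zpow_neg, zpow_ofNat]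
    _ = c * (a⁻¹ - b⁻¹) := by
        rw [integral_zpow (.inr ⟨by norm_num, Set.notMem_uIcc_of_lt ha hb⟩),
          show (-2 : ℤ) + 1 = -1 by norm_num, zpow_neg_one, zpow_neg_one]
        push_cast
        ring

lemma le_two_mul_integral_div_sq_of_monotoneOn (ha : 0 < a)
    (hψ : MonotoneOn ψ (Set.Icc a (2 * a))) :
    ψ a ≤ 2 * a * ∫ t in a..2 * a, ψ t / t ^ 2 := by
  have hab : a ≤ 2 * a := by linarith
  calc ψ a = 2 * a * ∫ t in a..2 * a, ψ a / t ^ 2 := by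
        rw [integral_const_div_sq _ ha (by linarith)]
        field_simp
        ring
    _ ≤ 2 * a * ∫ t in a..2 * a, ψ t / t ^ 2 := by
        gcongr
        refine intervalIntegral.integral_mono_on hab
          (intervalIntegrable_div_sq_of_monotoneOn ha hab monotoneOn_const)
          (intervalIntegrable_div_sq_of_monotoneOn ha hab hψ) fun t ht => ?_
        gcongr
        exact hψ (Set.left_mem_Icc.2 hab) ht ht.1

end Integral

namespace IsSummableDefect

variable {φ ψ : ℝ → ℝ}

lemma zero : IsSummableDefect 0 where
  nonneg _ _ := le_rfl
  monotoneOn := monotoneOn_const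
  integrableOn := by simp

lemma add (hφ : IsSummableDefect φ) (hψ : IsSummableDefect ψ) : IsSummableDefect (φ + ψ) where
  nonneg t ht := add_nonneg (hφ.nonneg t ht) (hψ.nonneg t ht)
  monotoneOn := hφ.monotoneOn.add hψ.monotoneOn
  integrableOn := by
    simpa only [Pi.add_apply, add_div] using! hφ.integrableOn.add hψ.integrableOn

lemma const_mul (hφ : IsSummableDefect φ) {C : ℝ} (hC : 0 ≤ C) :
    IsSummableDefect fun t => C * φ t where
  nonneg t ht := mul_nonneg hC (hφ.nonneg t ht)
  monotoneOn _ hs _ ht hst := mul_le_mul_of_nonneg_left (hφ.monotoneOn hs ht hst) hC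
  integrableOn := by
    simpa only [mul_div_assoc, IntegrableOn] using hφ.integrableOn.const_mul C

lemma div_sq_nonneg (hψ : IsSummableDefect ψ) {t : ℝ} (ht : t ∈ Set.Ioi 1) : 0 ≤ ψ t / t ^ 2 :=
  div_nonneg (hψ.nonneg t (le_of_lt ht)) (sq_nonneg t)

lemma integral_nonneg (hψ : IsSummableDefect ψ) : 0 ≤ ∫ t in Set.Ioi 1, ψ t / t ^ 2 :=
  setIntegral_nonneg measurableSet_Ioi fun _ => hψ.div_sq_nonneg

lemma integral_interval_le (hψ : IsSummableDefect ψ) {a b : ℝ} (ha : 1 ≤ a) (hab : a ≤ b) :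
    ∫ t in a..b, ψ t / t ^ 2 ≤ ∫ t in Set.Ioi 1, ψ t / t ^ 2 := by
  rw [intervalIntegral.integral_of_le hab]
  exact setIntegral_mono_set hψ.integrableOn
    (ae_restrict_of_forall_mem measurableSet_Ioi fun _ => hψ.div_sq_nonneg)
    (Set.Ioc_subset_Ioi_self.trans (Set.Ioi_subset_Ioi ha)).eventuallyLE

lemma le_two_mul_integral (hψ : IsSummableDefect ψ) {s : ℝ} (hs : 1 ≤ s) :
    ψ s ≤ 2 * s * ∫ t in Set.Ioi 1, ψ t / t ^ 2 := by
  refine (le_two_mul_integral_div_sq_of_monotoneOn (by linarith)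
    (hψ.monotoneOn.mono fun t ht => hs.trans ht.1)).trans ?_
  gcongr
  exact hψ.integral_interval_le hs (by linarith)

end IsSummableDefect

lemma Admissible.isSummableDefect {φ : ℝ → ℝ} (hφ : Admissible φ) : IsSummableDefect φ := by
  obtain ⟨_, hnonneg, hmono, -, hint, -⟩ := hφ
  exact ⟨hnonneg, hmono, hint 1 le_rfl⟩

namespace IsAlmostSubadditive

variable {E : ℕ → ℝ} {ψ : ℝ → ℝ}

lemma apply_two_pow_le (hE : IsAlmostSubadditive E ψ) (hψ : MonotoneOn ψ (Set.Ici 2)) (k : ℕ) :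
    E (2 ^ k) ≤ 2 ^ k * (E 1 + 2 * ∫ t in (2 : ℝ)..2 ^ (k + 1), ψ t / t ^ 2) := by
  induction k with
  | zero => simp
  | succ k ih =>
    have hle : (2 : ℝ) ≤ 2 ^ (k + 1) := le_self_pow₀ one_le_two k.succ_ne_zero
    have hmono {a b : ℝ} (ha : 2 ≤ a) : MonotoneOn ψ (Set.Icc a b) :=
      hψ.mono fun t ht => ha.trans ht.1
    have hdouble : E (2 ^ (k + 1)) ≤ 2 * E (2 ^ k) + ψ (2 ^ (k + 1)) := by
      have := hE (2 ^ k) (2 ^ k) Nat.one_le_two_pow Nat.one_le_two_pow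
      rw [← two_mul, ← pow_succ'] at this
      push_cast at this
      linarith
    have hdefect := le_two_mul_integral_div_sq_of_monotoneOn (by positivity)
      (hmono (b := 2 * 2 ^ (k + 1)) hle)
    rw [← pow_succ'] at hdefect
    have hpow : (2 : ℝ) ^ (k + 1) ≤ 2 ^ (k + 1 + 1) := pow_le_pow_right₀ one_le_two (by omega)
    have hadd := intervalIntegral.integral_add_adjacent_intervals
      (intervalIntegrable_div_sq_of_monotoneOn two_pos hle (hmono le_rfl))
      (intervalIntegrable_div_sq_of_monotoneOn (by positivity) hpow (hmono hle))
    rw [← hadd]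
    calc E (2 ^ (k + 1)) ≤ 2 * E (2 ^ k) + ψ (2 ^ (k + 1)) := hdouble
      _ ≤ 2 * (2 ^ k * (E 1 + 2 * ∫ t in (2 : ℝ)..2 ^ (k + 1), ψ t / t ^ 2))
          + 2 ^ (k + 1 + 1) * ∫ t in (2 : ℝ) ^ (k + 1)..2 ^ (k + 1 + 1), ψ t / t ^ 2 := by
        gcongr
      _ = _ := by ring

lemma apply_two_pow_le_integral (hE : IsAlmostSubadditive E ψ) (hψ : IsSummableDefect ψ) (k : ℕ) :
    E (2 ^ k) ≤ 2 ^ k * (E 1 + 2 * ∫ t in Set.Ioi 1, ψ t / t ^ 2) := by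
  refine (hE.apply_two_pow_le (hψ.monotoneOn.mono (Set.Ici_subset_Ici.2 one_le_two)) k).trans ?_
  gcongr
  exact hψ.integral_interval_le one_le_two (le_self_pow₀ one_le_two k.succ_ne_zero)

theorem le_mul_integral (hE : IsAlmostSubadditive E ψ) (hψ : IsSummableDefect ψ) {n : ℕ}
    (hn : 1 ≤ n) : E n ≤ n * (E 1 + 6 * ∫ t in Set.Ioi 1, ψ t / t ^ 2) := by
  have hI : 0 ≤ ∫ t in Set.Ioi 1, ψ t / t ^ 2 := hψ.integral_nonneg
  have hpow := hE.apply_two_pow_le_integral hψ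
  set I := ∫ t in Set.Ioi 1, ψ t / t ^ 2
  induction n using Nat.strong_induction_on with
  | _ n ih =>
    have hlt : n < 2 * 2 ^ Nat.log 2 n := by
      rw [← pow_succ']
      exact Nat.lt_pow_succ_log_self one_lt_two n
    obtain ⟨r, hr⟩ := Nat.exists_eq_add_of_le (Nat.pow_log_le_self 2 (by omega : n ≠ 0))
    generalize Nat.log 2 n = k at hlt hr
    have hk : 1 ≤ 2 ^ k := Nat.one_le_two_pow
    rcases Nat.eq_zero_or_pos r with rfl | hr0
    · subst hr
      push_cast
      refine (hpow k).trans ?_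
      rw [add_zero]
      gcongr
      norm_num
    · have hdefect : ψ n ≤ 4 * 2 ^ k * I := by
        have hlt' : (n : ℝ) ≤ 2 * 2 ^ k := mod_cast hlt.le
        calc ψ n ≤ 2 * n * I := hψ.le_two_mul_integral (mod_cast hn)
          _ ≤ 2 * (2 * 2 ^ k) * I := by gcongr
          _ = 4 * 2 ^ k * I := by ring
      calc E n ≤ E (2 ^ k) + E r + ψ n := by simpa only [← hr] using hE (2 ^ k) r hk hr0
        _ ≤ 2 ^ k * (E 1 + 2 * I) + r * (E 1 + 6 * I) + 4 * 2 ^ k * I :=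
          add_le_add_three (hpow k) (ih r (by omega) hr0) hdefect
        _ = n * (E 1 + 6 * I) := by
          rw [hr]
          push_cast
          ring

end IsAlmostSubadditive

lemma IsPseudoMetric.nonneg {Γ : Type*} {d : Γ → Γ → ℝ} (hd : IsPseudoMetric d) (x y : Γ) :
    0 ≤ d x y := by
  obtain ⟨hself, hsymm, htri⟩ := hd
  linarith [htri x y x, hself x, hsymm x y]

section Dista

variable {Γ : Type*} {d : Γ → Γ → ℝ}

lemma isBoundedUnder_ge_dist_div (hd : IsPseudoMetric d) (γ₁ γ₂ : ℕ → Γ) :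
    IsBoundedUnder (· ≥ ·) atTop fun n : ℕ => d (γ₁ n) (γ₂ n) / n :=
  isBoundedUnder_of_eventually_ge (a := 0) <|
    .of_forall fun n => div_nonneg (hd.nonneg _ _) n.cast_nonneg

lemma dista_triangle (hd : IsPseudoMetric d) {γ₁ γ₂ γ₃ : ℕ → Γ}
    (h₁₂ : IsBoundedUnder (· ≤ ·) atTop fun n : ℕ => d (γ₁ n) (γ₂ n) / n)
    (h₂₃ : IsBoundedUnder (· ≤ ·) atTop fun n : ℕ => d (γ₂ n) (γ₃ n) / n) :
    dista d γ₁ γ₃ ≤ dista d γ₁ γ₂ + dista d γ₂ γ₃ := by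
  have hge := isBoundedUnder_ge_dist_div hd
  refine (limsup_le_limsup (.of_forall fun n => ?_) (hge γ₁ γ₃).isCoboundedUnder_le
    (isBoundedUnder_le_add h₁₂ h₂₃)).trans
      (limsup_add_le (hge γ₁ γ₂) h₁₂ (hge γ₂ γ₃).isCoboundedUnder_le h₂₃)
  simp only [Pi.add_apply, ← add_div]
  gcongr
  exact hd.2.2 _ _ _

end Dista

section MetricAbelianMonoid

variable {Γ : Type*} [AddCommMonoid Γ] {d : Γ → Γ → ℝ}

lemma IsMetricAbelianMonoid.dist_add_add_le (h : IsMetricAbelianMonoid d) (a b a' b' : Γ) :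
    d (a + b) (a' + b') ≤ d a a' + d b b' := by
  obtain ⟨⟨-, -, htri⟩, hlip⟩ := h
  calc d (a + b) (a' + b') ≤ d (b + a) (b + a') + d (a' + b) (a' + b') := by
        simpa only [add_comm b] using htri (a + b) (a' + b) (a' + b')
    _ ≤ d a a' + d b b' := add_le_add (hlip b a a') (hlip a' b b')

lemma quasiLinear_nsmul (hd : IsPseudoMetric d) (g : Γ) : QuasiLinear d 0 fun n => n • g :=
  ⟨zero_nsmul g, fun m n _ _ => by simp only [add_nsmul, hd.1, Pi.zero_apply, le_rfl]⟩

namespace QuasiLinear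

variable {φ ψ : ℝ → ℝ} {γ₁ γ₂ : ℕ → Γ}

lemma isAlmostSubadditive_dist (h : IsMetricAbelianMonoid d) (h₁ : QuasiLinear d φ γ₁)
    (h₂ : QuasiLinear d ψ γ₂) :
    IsAlmostSubadditive (fun n => d (γ₁ n) (γ₂ n)) (φ + ψ) := by
  intro m n hm hn
  obtain ⟨-, hsymm, htri⟩ := h.1
  have hdefect₁ := h₁.2 m n hm hn
  have hdefect₂ := h₂.2 m n hm hn
  rw [hsymm] at hdefect₂
  calc d (γ₁ (m + n)) (γ₂ (m + n))
      ≤ d (γ₁ (m + n)) (γ₁ m + γ₁ n) +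
        (d (γ₁ m + γ₁ n) (γ₂ m + γ₂ n) + d (γ₂ m + γ₂ n) (γ₂ (m + n))) :=
        (htri _ _ _).trans (add_le_add_right (htri _ _ _) _)
    _ ≤ φ (m + n : ℕ) + (d (γ₁ m) (γ₂ m) + d (γ₁ n) (γ₂ n) + ψ (m + n : ℕ)) := by
        gcongr
        exact h.dist_add_add_le _ _ _ _
    _ = d (γ₁ m) (γ₂ m) + d (γ₁ n) (γ₂ n) + (φ + ψ) (m + n : ℕ) := by
        rw [Pi.add_apply]
        ring

lemma eventually_dist_div_le (h : IsMetricAbelianMonoid d) (hφ : IsSummableDefect φ)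
    (hψ : IsSummableDefect ψ) (h₁ : QuasiLinear d φ γ₁) (h₂ : QuasiLinear d ψ γ₂) :
    ∀ᶠ n : ℕ in atTop, d (γ₁ n) (γ₂ n) / n ≤
      d (γ₁ 1) (γ₂ 1) + 6 * ∫ t in Set.Ioi 1, (φ + ψ) t / t ^ 2 := by
  filter_upwards [eventually_ge_atTop 1] with n hn
  rw [div_le_iff₀' (by exact_mod_cast hn)]
  exact (h₁.isAlmostSubadditive_dist h h₂).le_mul_integral (hφ.add hψ) hn

lemma isBoundedUnder_dist_div (h : IsMetricAbelianMonoid d) (hφ : IsSummableDefect φ)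
    (hψ : IsSummableDefect ψ) (h₁ : QuasiLinear d φ γ₁) (h₂ : QuasiLinear d ψ γ₂) :
    IsBoundedUnder (· ≤ ·) atTop fun n : ℕ => d (γ₁ n) (γ₂ n) / n :=
  isBoundedUnder_of_eventually_le (h₁.eventually_dist_div_le h hφ hψ h₂)

theorem dista_nsmul_le (h : IsMetricAbelianMonoid d) (hφ : IsSummableDefect φ)
    (h₁ : QuasiLinear d φ γ₁) :
    dista d γ₁ (fun n => n • γ₁ 1) ≤ 6 * ∫ t in Set.Ioi 1, φ t / t ^ 2 := by
  have hbound := h₁.eventually_dist_div_le h hφ .zero (quasiLinear_nsmul h.1 (γ₁ 1))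
  rw [one_nsmul, h.1.1, zero_add, add_zero] at hbound
  exact limsup_le_of_le (isBoundedUnder_ge_dist_div h.1 _ _).isCoboundedUnder_le hbound

end QuasiLinear

end MetricAbelianMonoid

theorem linear_sequences_dense_general {Γ : Type*} [AddCommMonoid Γ] {d : Γ → Γ → ℝ}
    (h : IsMetricAbelianMonoid d) {φ : ℝ → ℝ} (hφ : IsSummableDefect φ) {γ : ℕ → Γ}
    (hγ : QuasiLinear d φ γ)
    (hvdp : ∀ ε > (0 : ℝ), ∃ (γ' : ℕ → Γ) (ψ : ℝ → ℝ), IsSummableDefect ψ ∧ QuasiLinear d ψ γ' ∧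
      dista d γ γ' < ε ∧ ∫ t in Set.Ioi (1 : ℝ), ψ t / t ^ 2 < ε) :
    ∀ ε > (0 : ℝ), ∃ g : Γ, dista d γ (fun n : ℕ => n • g) < ε := by
  intro ε hε
  obtain ⟨γ', ψ, hψ, hγ', hdist, hint⟩ := hvdp (ε / 7) (by positivity)
  have hlinear := quasiLinear_nsmul h.1 (γ' 1)
  refine ⟨γ' 1, ?_⟩
  calc dista d γ (fun n => n • γ' 1) ≤ dista d γ γ' + dista d γ' fun n => n • γ' 1 :=
        dista_triangle h.1 (hγ.isBoundedUnder_dist_div h hφ hψ hγ')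
          (hγ'.isBoundedUnder_dist_div h hψ .zero hlinear)
    _ ≤ dista d γ γ' + 6 * ∫ t in Set.Ioi 1, ψ t / t ^ 2 := by
        gcongr
        exact hγ'.dista_nsmul_le h hψ
    _ < ε := by linarith

/-- If the vanishing defect property holds, then linear sequences are dense in
the space of quasi-linear sequences with the asymptotic distance. -/
theorem linear_sequences_dense {Γ : Type*} [AddCommMonoid Γ]
    (d : Γ → Γ → ℝ) (h : IsMetricAbelianMonoid d)
    (φ : ℝ → ℝ) (hφ : Admissible φ)
    (hvdp : ∀ ε > (0 : ℝ), ∀ γ : ℕ → Γ,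
      (∃ C ≥ (0 : ℝ), QuasiLinear d (fun t => C * φ t) γ) →
      ∃ (γ' : ℕ → Γ) (ψ : ℝ → ℝ), Admissible ψ ∧ QuasiLinear d ψ γ' ∧
        dista d γ γ' = 0 ∧ (∫ t in Set.Ioi (1 : ℝ), ψ t / t ^ 2) < ε) :
    ∀ γ : ℕ → Γ, (∃ C ≥ (0 : ℝ), QuasiLinear d (fun t => C * φ t) γ) →
      ∀ ε > (0 : ℝ), ∃ g : Γ, dista d γ (fun n : ℕ => n • g) < ε := by
  rintro γ ⟨C, hC, hγ⟩
  refine linear_sequences_dense_general h (hφ.isSummableDefect.const_mul hC) hγ fun ε hε => ?_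
  obtain ⟨γ', ψ, hψ, hγ', hdist, hint⟩ := hvdp ε hε γ ⟨C, hC, hγ⟩
  exact ⟨γ', ψ, hψ.isSummableDefect, hγ', hdist.trans_lt hε, hint⟩
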